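/- arXiv:1611.07380 — 4 statements merged into one kernel-verified Lean document; each statement's English description precedes it below -/
import Mathlib

section
/- Let W be a closure space in which the empty set is closed. If W is LS(W)⁺-homogeneous and κ(W) = ℵ₀ (W has finite character), then W has exchange over the empty set. -/
open Cardinal Set

universe u v

variable {X : Type u}

/-- `cl` is a closure operator: monotonicity and transitivity. -/
def IsClosure (cl : Set X → Set X) : Prop :=
  (∀ A : Set X, A ⊆ cl A) ∧ ∀ A B : Set X, A ⊆ cl B → cl A ⊆ cl B

/-- `f` is an automorphism of the closure space `(X, cl)`. -/
def IsAuto (cl : Set X → Set X) (f : X → X) : Prop :=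
  Function.Bijective f ∧ ∀ A : Set X, f '' cl A = cl (f '' A)

/-- The closure space `(X, cl)` is `μ`-homogeneous. -/
def IsHomog (cl : Set X → Set X) (μ : Cardinal.{u}) : Prop :=
  ∀ A : Set X, #A < μ → ∀ a b : X, a ∉ cl A → b ∉ cl A →
    ∃ f : X → X, IsAuto cl f ∧ (∀ x ∈ A, f x = x) ∧ f a = b

/-- The closure space `(X, cl)` has exchange over `A`. -/
def ExchOver (cl : Set X → Set X) (A : Set X) : Prop :=
  ∀ a b : X, a ∈ cl (A ∪ {b}) → a ∉ cl A → b ∈ cl (A ∪ {a})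

/-- The localization `W_A`: the closure space on `X \ A` with
`cl^{W_A}(B) = cl(A ∪ B) ∩ (X \ A)`. -/
def locCl (cl : Set X → Set X) (A : Set X) :
    Set {x : X // x ∉ A} → Set {x : X // x ∉ A} :=
  fun B => {x | (x : X) ∈ cl (A ∪ (Subtype.val '' B))}

/-- `κ(W)`: the least infinite cardinal `κ` such that whenever `a ∈ cl A` there is
`A₀ ⊆ A` with `|A₀| < κ` and `a ∈ cl A₀`. -/
noncomputable def kappaCard (cl : Set X → Set X) : Cardinal.{u} :=
  sInf {κ : Cardinal.{u} | ℵ₀ ≤ κ ∧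
    ∀ (A : Set X) (a : X), a ∈ cl A → ∃ A₀, A₀ ⊆ A ∧ #A₀ < κ ∧ a ∈ cl A₀}

/-- `LS(W)`: the least infinite cardinal `μ` such that `|cl A| ≤ |A| + μ` for all `A`. -/
noncomputable def LSCard (cl : Set X → Set X) : Cardinal.{u} :=
  sInf {μ : Cardinal.{u} | ℵ₀ ≤ μ ∧ ∀ A : Set X, #(cl A) ≤ #A + μ}

/-!
Localizing at a finite set reduces exchange to the case over `∅`. Write `x ≤ y` for `x ∈ cl {y}`.
If exchange over `∅` fails, homogeneity over `∅` moves the failure to every point outside `cl ∅`,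
which therefore has a strict upper bound, and homogeneity over singletons makes `≤` total. Given
`b ∉ cl ∅`, let `U` be the set of points strictly below `b`. By totality `U ⊆ cl {b}`, so the space
is homogeneous over `U`, and by finite character nothing in `cl U` is above `b`. Hence some
automorphism fixes `U` pointwise and moves `b` to a point strictly above it. The preimage of `b`
then lies strictly below `b`, so in `U`, which is fixed pointwise: a contradiction.
-/

/-- Homogeneity over a single set `A`, so that `IsHomog cl μ` asks for it over all `A` with
`#A < μ`. -/
def IsHomogOver (cl : Set X → Set X) (A : Set X) : Prop :=
  ∀ a b : X, a ∉ cl A → b ∉ cl A → ∃ f : X → X, IsAuto cl f ∧ (∀ x ∈ A, f x = x) ∧ f a = b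

/-- Homogeneity over every subset of the closure of a finite set. This is the part of
`LS(W)⁺`-homogeneity that forces exchange, and it is inherited by localizations at finite sets. -/
def IsFGHomog (cl : Set X → Set X) : Prop :=
  ∀ F A : Set X, F.Finite → A ⊆ cl F → IsHomogOver cl A

/-- Finite character, that is `κ(W) = ℵ₀`, stated without cardinals. -/
def HasFiniteCharacter (cl : Set X → Set X) : Prop :=
  ∀ (A : Set X) (a : X), a ∈ cl A → ∃ A₀ ⊆ A, A₀.Finite ∧ a ∈ cl A₀

/-- The localization of a closure space at `A`. Unlike in `locCl`, the points of `A` are kept, so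
that the underlying set does not change. -/
def clOver (cl : Set X → Set X) (A B : Set X) : Set X :=
  cl (A ∪ B)

section

variable {cl : Set X → Set X} {A B F : Set X} {f : X → X} {a b c x y z : X}

theorem LSCard_mem (cl : Set X → Set X) :
    LSCard cl ∈ {μ : Cardinal.{u} | ℵ₀ ≤ μ ∧ ∀ A : Set X, #(cl A) ≤ #A + μ} :=
  csInf_mem ⟨max ℵ₀ #X, le_max_left _ _, fun A =>
    ((mk_set_le (cl A)).trans (le_max_right _ _)).trans (self_le_add_left _ _)⟩

theorem mk_cl_le_LSCard (hF : F.Finite) : #(cl F) ≤ LSCard cl := by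
  obtain ⟨hω, hle⟩ := LSCard_mem cl
  calc #(cl F) ≤ #F + LSCard cl := hle F
    _ = LSCard cl := add_eq_right hω (hF.lt_aleph0.le.trans hω)

theorem kappaCard_mem (cl : Set X → Set X) :
    kappaCard cl ∈ {κ : Cardinal.{u} | ℵ₀ ≤ κ ∧
      ∀ (A : Set X) (a : X), a ∈ cl A → ∃ A₀, A₀ ⊆ A ∧ #A₀ < κ ∧ a ∈ cl A₀} :=
  csInf_mem ⟨Order.succ (max ℵ₀ #X), (le_max_left _ _).trans (Order.le_succ _), fun A _ ha =>
    ⟨A, subset_rfl, Order.lt_succ_of_le ((mk_set_le A).trans (le_max_right _ _)), ha⟩⟩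

theorem hasFiniteCharacter_of_kappaCard_eq (hκ : kappaCard cl = ℵ₀) : HasFiniteCharacter cl := by
  intro A a ha
  obtain ⟨A₀, hA₀, hlt, haA₀⟩ := (kappaCard_mem cl).2 A a ha
  exact ⟨A₀, hA₀, lt_aleph0_iff_set_finite.1 (hκ ▸ hlt), haA₀⟩

theorem IsHomog.isFGHomog {μ : Cardinal.{u}} (hhom : IsHomog cl μ)
    (hμ : ∀ F : Set X, F.Finite → #(cl F) < μ) : IsFGHomog cl :=
  fun F A hF hA => hhom A ((mk_le_mk_of_subset hA).trans_lt (hμ F hF))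

theorem IsClosure.mono (hcl : IsClosure cl) (h : A ⊆ B) : cl A ⊆ cl B :=
  hcl.2 A B (h.trans (hcl.1 B))

theorem IsClosure.mem_cl_singleton_self (hcl : IsClosure cl) (x : X) : x ∈ cl {x} :=
  hcl.1 {x} rfl

theorem IsClosure.cl_singleton_subset (hcl : IsClosure cl) (hx : x ∈ cl A) : cl {x} ⊆ cl A :=
  hcl.2 {x} A (singleton_subset_iff.2 hx)

theorem IsAuto.apply_mem_cl_singleton_iff (hf : IsAuto cl f) :
    f x ∈ cl {f y} ↔ x ∈ cl {y} := by
  rw [← image_singleton, ← hf.2, hf.1.1.mem_set_image]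

theorem IsFGHomog.isHomogOver_of_finite (hcl : IsClosure cl) (hhom : IsFGHomog cl)
    (hA : A.Finite) : IsHomogOver cl A :=
  hhom A A hA (hcl.1 A)

theorem exists_above_of_not_exchange (hhom : IsHomogOver cl A) (ha : a ∉ cl A) (hab : a ∈ cl {b})
    (hba : b ∉ cl {a}) (hx : x ∉ cl A) : ∃ y, x ∈ cl {y} ∧ y ∉ cl {x} := by
  obtain ⟨f, hf, -, rfl⟩ := hhom a x ha hx
  exact ⟨f b, hf.apply_mem_cl_singleton_iff.2 hab, mt hf.apply_mem_cl_singleton_iff.1 hba⟩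

theorem IsHomogOver.mem_cl_singleton_iff (hhom : IsHomogOver cl A) (hx : x ∈ A)
    (hy : y ∉ cl A) (hz : z ∉ cl A) : x ∈ cl {y} ↔ x ∈ cl {z} := by
  obtain ⟨f, hf, hfix, rfl⟩ := hhom y z hy hz
  rw [← hf.apply_mem_cl_singleton_iff, hfix x hx]

theorem mem_cl_singleton_or_of_not_exchange (hcl : IsClosure cl) (hhom : IsFGHomog cl)
    (ha : a ∉ cl ∅) (hab : a ∈ cl {b}) (hba : b ∉ cl {a}) (x y : X) :
    x ∈ cl {y} ∨ y ∈ cl {x} := by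
  by_cases hx : x ∈ cl ∅
  · exact .inl (hcl.mono (empty_subset _) hx)
  · obtain ⟨x', hxx', hx'x⟩ := exists_above_of_not_exchange
      (hhom.isHomogOver_of_finite hcl finite_empty) ha hab hba hx
    have hhom_x : IsHomogOver cl {x} := hhom.isHomogOver_of_finite hcl (finite_singleton x)
    exact or_iff_not_imp_right.2 fun hyx => (hhom_x.mem_cl_singleton_iff rfl hx'x hyx).1 hxx'

theorem exists_mem_cl_singleton_of_directedOn (hcl : IsClosure cl) (hfin : HasFiniteCharacter cl)
    (hne : A.Nonempty) (hdir : DirectedOn (fun x y => x ∈ cl {y}) A) (hy : y ∈ cl A) :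
    ∃ m ∈ A, y ∈ cl {m} := by
  obtain ⟨A₀, hA₀, hA₀fin, hyA₀⟩ := hfin A y hy
  have : IsTrans X fun x y => x ∈ cl {y} := ⟨fun _ _ _ hxy hyz => hcl.cl_singleton_subset hyz hxy⟩
  have := hne.to_subtype
  have := hA₀fin.to_subtype
  obtain ⟨m, hm⟩ := hdir.directed_val.finite_le (inclusion hA₀)
  have hA₀m : A₀ ⊆ cl {m.1} := fun x hx => hm ⟨x, hx⟩
  exact ⟨m, m.2, hcl.2 _ _ hA₀m hyA₀⟩

theorem notMem_cl_setOf_notMem_cl_singleton (hcl : IsClosure cl) (hfin : HasFiniteCharacter cl)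
    (htot : ∀ x y, x ∈ cl {y} ∨ y ∈ cl {x}) (hb : b ∉ cl ∅) (hby : b ∈ cl {y}) :
    y ∉ cl {x | b ∉ cl {x}} := by
  intro hy
  obtain hempty | hne := {x | b ∉ cl {x}}.eq_empty_or_nonempty
  · exact hb (hcl.cl_singleton_subset (hempty ▸ hy) hby)
  · have : Std.Total fun x y => x ∈ cl {y} := ⟨htot⟩
    obtain ⟨m, hm, hym⟩ := exists_mem_cl_singleton_of_directedOn hcl hfin hne
      (Std.Total.directedOn _) hy
    exact hm (hcl.cl_singleton_subset hym hby)

theorem IsHomogOver.mem_cl_singleton_of_notMem (hcl : IsClosure cl)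
    (hhom : IsHomogOver cl {x | b ∉ cl {x}}) (hb : b ∉ cl {x | b ∉ cl {x}})
    (hc : c ∉ cl {x | b ∉ cl {x}}) : c ∈ cl {b} := by
  obtain ⟨f, hf, hfix, rfl⟩ := hhom b c hb hc
  obtain ⟨d, hd⟩ := hf.1.2 b
  by_contra hfb
  have hbd : b ∉ cl {d} := by
    rwa [← hf.apply_mem_cl_singleton_iff, hd]
  have hdb : d = b := (hfix d hbd).symm.trans hd
  exact hbd (hdb ▸ hcl.mem_cl_singleton_self d)

theorem IsFGHomog.exchOver_empty (hcl : IsClosure cl) (hfin : HasFiniteCharacter cl)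
    (hhom : IsFGHomog cl) : ExchOver cl ∅ := by
  intro a b hab ha
  rw [empty_union] at hab ⊢
  by_contra hba
  have htot := mem_cl_singleton_or_of_not_exchange hcl hhom ha hab hba
  have hb : b ∉ cl ∅ := fun hb => ha (hcl.cl_singleton_subset hb hab)
  obtain ⟨c, hbc, hcb⟩ := exists_above_of_not_exchange
    (hhom.isHomogOver_of_finite hcl finite_empty) ha hab hba hb
  have hU : {x | b ∉ cl {x}} ⊆ cl {b} := fun x hx => (htot x b).resolve_right hx
  have hout : ∀ y, b ∈ cl {y} → y ∉ cl {x | b ∉ cl {x}} := fun y =>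
    notMem_cl_setOf_notMem_cl_singleton hcl hfin htot hb
  exact hcb <| (hhom {b} _ (finite_singleton b) hU).mem_cl_singleton_of_notMem hcl
    (hout b (hcl.mem_cl_singleton_self b)) (hout c hbc)

theorem IsClosure.clOver (hcl : IsClosure cl) (A : Set X) : IsClosure (clOver cl A) :=
  ⟨fun B => subset_union_right.trans (hcl.1 (A ∪ B)), fun _ C hBC =>
    hcl.2 _ _ (union_subset (subset_union_left.trans (hcl.1 (A ∪ C))) hBC)⟩

theorem HasFiniteCharacter.clOver (hcl : IsClosure cl) (hfin : HasFiniteCharacter cl)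
    (A : Set X) : HasFiniteCharacter (clOver cl A) := by
  intro B a ha
  obtain ⟨C, hC, hCfin, haC⟩ := hfin (A ∪ B) a ha
  have hCsub : C ⊆ A ∪ C ∩ B := fun x hx => (hC hx).imp_right fun hxB => ⟨hx, hxB⟩
  exact ⟨C ∩ B, inter_subset_right, hCfin.inter_of_left B, hcl.mono hCsub haC⟩

theorem IsAuto.clOver (hf : IsAuto cl f) (hfix : ∀ x ∈ A, f x = x) : IsAuto (clOver cl A) f := by
  have hA : f '' A = A := (image_congr hfix).trans (image_id' A)
  refine ⟨hf.1, fun B => ?_⟩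
  calc f '' cl (A ∪ B) = cl (f '' A ∪ f '' B) := by rw [hf.2, image_union]
    _ = cl (A ∪ f '' B) := by rw [hA]

theorem IsHomogOver.clOver (hhom : IsHomogOver cl (A ∪ B)) : IsHomogOver (clOver cl A) B := by
  intro a b ha hb
  obtain ⟨f, hf, hfix, hab⟩ := hhom a b ha hb
  exact ⟨f, hf.clOver fun x hx => hfix x (.inl hx), fun x hx => hfix x (.inr hx), hab⟩

theorem IsFGHomog.clOver (hcl : IsClosure cl) (hhom : IsFGHomog cl) (hA : A.Finite) :
    IsFGHomog (clOver cl A) := fun F B hF hB =>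
  (hhom (A ∪ F) (A ∪ B) (hA.union hF)
    (union_subset (subset_union_left.trans (hcl.1 (A ∪ F))) hB)).clOver

theorem exchOver_of_exchOver_clOver_empty (h : ExchOver (clOver cl A) ∅) : ExchOver cl A := by
  simpa only [ExchOver, clOver, empty_union, union_empty] using h

theorem exchOver_of_forall_finite (hcl : IsClosure cl) (hfin : HasFiniteCharacter cl)
    (h : ∀ F : Set X, F.Finite → ExchOver cl F) (A : Set X) : ExchOver cl A := by
  intro a b hab ha
  obtain ⟨F, hF, hFfin, haF⟩ := hfin.clOver hcl {b} A a (by rwa [clOver, union_comm])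
  have hab' : a ∈ cl (F ∪ {b}) := by rwa [union_comm]
  exact hcl.mono (union_subset_union_left _ hF)
    (h F hFfin a b hab' fun haF' => ha (hcl.mono hF haF'))

end

theorem stmt9_general {cl : Set X → Set X} (hcl : IsClosure cl) (hfin : HasFiniteCharacter cl)
    (hhom : IsFGHomog cl) (A : Set X) : ExchOver cl A :=
  exchOver_of_forall_finite hcl hfin (fun _ hF => exchOver_of_exchOver_clOver_empty <|
    (hhom.clOver hcl hF).exchOver_empty (hcl.clOver _) (hfin.clOver hcl _)) A

/-- A closure space with `∅` closed which is `LS(W)⁺`-homogeneous and has finite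
character (`κ(W) = ℵ₀`) has exchange over `∅`. -/
theorem stmt9 (cl : Set X → Set X) (hcl : IsClosure cl) (hempty : cl ∅ = ∅)
    (hhom : IsHomog cl (Order.succ (LSCard cl))) (hκ : kappaCard cl = ℵ₀) :
    ExchOver cl ∅ := by
  have hfg := hhom.isFGHomog fun _ hF => Order.lt_succ_of_le (mk_cl_le_LSCard hF)
  exact stmt9_general hcl (hasFiniteCharacter_of_kappaCard_eq hκ) hfg ∅
end

section
/- Let W be a closure space in which the empty set is closed and which has finite character (κ(W) = ℵ₀). Suppose the relation a ≤ b defined by a ∈ cl({b}) is total, i.e., for all a, b in W either a ∈ cl({b}) or b ∈ cl({a}). Then for every nonempty family ⟨A_i : i ∈ I⟩ of subsets of the underlying set of W, cl(⋃_{i ∈ I} A_i) = ⋃_{i ∈ I} cl(A_i). -/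
open Cardinal Set

universe u v

variable {X : Type u}

/-!
By totality closed sets form a chain: if `x ∈ cl A \ cl B`, then no `b ∈ B` has `x ∈ cl {b}`, so
every `b ∈ B` lies in `cl {x} ⊆ cl A`. A finite subset of the union of the `A i` is therefore
contained in a single `cl (A i)`, and by finite character every point of the closure of the union
is in the closure of such a finite subset.
-/

theorem exists_subset_mk_lt_kappaCard {cl : Set X → Set X} {A : Set X} {a : X} (ha : a ∈ cl A) :
    ∃ A₀ ⊆ A, #A₀ < kappaCard cl ∧ a ∈ cl A₀ := by
  -- `sInf ∅ = 0`, so a candidate is needed: for `κ > #X` one can take `A₀ = A`.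
  have attained : kappaCard cl ∈ {κ : Cardinal.{u} | ℵ₀ ≤ κ ∧
      ∀ (A : Set X) (a : X), a ∈ cl A → ∃ A₀, A₀ ⊆ A ∧ #A₀ < κ ∧ a ∈ cl A₀} :=
    csInf_mem ⟨max ℵ₀ (Order.succ #X), le_max_left _ _, fun A _ ha =>
      ⟨A, Subset.rfl, lt_max_of_lt_right (Order.lt_succ_of_le (mk_set_le A)), ha⟩⟩
  exact attained.2 A a ha

theorem exists_finite_subset_mem_cl {cl : Set X → Set X} (hκ : kappaCard cl = ℵ₀) {A : Set X}
    {a : X} (ha : a ∈ cl A) : ∃ F ⊆ A, F.Finite ∧ a ∈ cl F := by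
  obtain ⟨F, hFA, hF, haF⟩ := exists_subset_mk_lt_kappaCard ha
  exact ⟨F, hFA, lt_aleph0_iff_set_finite.1 (hκ ▸ hF), haF⟩

namespace IsClosure

variable {cl : Set X → Set X}

theorem subset_cl (hcl : IsClosure cl) (A : Set X) : A ⊆ cl A :=
  hcl.1 A

theorem cl_subset_cl_iff (hcl : IsClosure cl) {A B : Set X} : cl A ⊆ cl B ↔ A ⊆ cl B :=
  ⟨(hcl.subset_cl A).trans, hcl.2 A B⟩

theorem cl_mono (hcl : IsClosure cl) : Monotone cl := fun _ B hAB =>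
  hcl.cl_subset_cl_iff.2 (hAB.trans (hcl.subset_cl B))

theorem cl_singleton_subset_cl_iff (hcl : IsClosure cl) {a : X} {A : Set X} :
    cl {a} ⊆ cl A ↔ a ∈ cl A :=
  hcl.cl_subset_cl_iff.trans singleton_subset_iff

theorem cl_subset_cl_total (hcl : IsClosure cl) (htotal : ∀ a b : X, a ∈ cl {b} ∨ b ∈ cl {a})
    (A B : Set X) : cl A ⊆ cl B ∨ cl B ⊆ cl A := by
  refine or_iff_not_imp_left.2 fun hAB => hcl.cl_subset_cl_iff.2 fun b hb => ?_
  obtain ⟨x, hxA, hxB⟩ := not_subset.1 hAB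
  have hx_notMem : x ∉ cl {b} := fun hx => hxB (hcl.cl_mono (singleton_subset_iff.2 hb) hx)
  have hb_mem : b ∈ cl {x} := (htotal x b).resolve_left hx_notMem
  exact hcl.cl_singleton_subset_cl_iff.2 hxA hb_mem

theorem directed_cl (hcl : IsClosure cl) (htotal : ∀ a b : X, a ∈ cl {b} ∨ b ∈ cl {a})
    {ι : Sort*} (A : ι → Set X) : Directed (· ⊆ ·) fun i => cl (A i) := fun i j =>
  (hcl.cl_subset_cl_total htotal (A i) (A j)).elim (fun h => ⟨j, h, Subset.rfl⟩)
    fun h => ⟨i, Subset.rfl, h⟩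

end IsClosure

theorem stmt11_general {cl : Set X → Set X} (hcl : IsClosure cl) (hκ : kappaCard cl = ℵ₀)
    {ι : Type v} [Nonempty ι] {A : ι → Set X} (hA : Directed (· ⊆ ·) fun i => cl (A i)) :
    cl (⋃ i, A i) = ⋃ i, cl (A i) := by
  refine Subset.antisymm (fun a ha => ?_) hcl.cl_mono.le_map_iSup
  obtain ⟨F, hFA, hF, haF⟩ := exists_finite_subset_mem_cl hκ ha
  have hF_iUnion : F ⊆ ⋃ i, cl (A i) := hFA.trans (iUnion_mono fun i => hcl.subset_cl (A i))
  lift F to Finset X using hF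
  obtain ⟨i, hi⟩ := hA.exists_mem_subset_of_finset_subset_biUnion hF_iUnion
  exact mem_iUnion_of_mem i (hcl.cl_subset_cl_iff.2 hi haF)

/-- In a closure space with `∅` closed, finite character, and a total relation
`a ∈ cl {b} ∨ b ∈ cl {a}`, closure commutes with nonempty unions. -/
theorem stmt11 (cl : Set X → Set X) (hcl : IsClosure cl) (hempty : cl ∅ = ∅)
    (hκ : kappaCard cl = ℵ₀)
    (htotal : ∀ a b : X, a ∈ cl {b} ∨ b ∈ cl {a})
    {ι : Type v} [Nonempty ι] (A : ι → Set X) :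
    cl (⋃ i, A i) = ⋃ i, cl (A i) :=
  stmt11_general hcl hκ (hcl.directed_cl htotal A)
end

section
/- There exists a closure space W of cardinality ℵ₁ such that W is ℵ₁-homogeneous, the empty set is closed in W, LS(W) = ℵ₀, κ(W) = ℵ₁, and W fails exchange over the empty set. (For example, the closure space on ℚ × ω₁ with the reverse lexicographic order, where cl₂(A) consists of the downward closure of A together with all b all of whose strict predecessors lie in the downward closure of A.) -/
open Cardinal Set

universe u v

variable {X : Type u}

/-!
In a dense linear order without endpoints whose proper initial segments are countable, such as
`ℚ × ω₁`, adding to every down-set its supremum, if there is one, gives a closure operator. Up to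
one point, a closure is a union of countable initial segments, one for each generator, and any two
points outside it lie in a common convex copy of `ℚ` disjoint from it. A point is in the closure of
its predecessors but of no finite set of them, and exchange fails because the closure of a singleton
is the initial segment below it.
-/

section ClosureSpace

variable (cl : Set X → Set X)

theorem aleph0_le_LSCard : ℵ₀ ≤ LSCard cl := by
  refine le_csInf ⟨max ℵ₀ #X, ?_⟩ fun _ h => h.1
  exact ⟨le_max_left _ _, fun A =>
    (mk_set_le _).trans ((le_max_right _ _).trans (self_le_add_left _ _))⟩

theorem kappaCard_spec : ℵ₀ ≤ kappaCard cl ∧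
    ∀ (A : Set X) (a : X), a ∈ cl A → ∃ A₀, A₀ ⊆ A ∧ #A₀ < kappaCard cl ∧ a ∈ cl A₀ := by
  refine csInf_mem (s := {κ | ℵ₀ ≤ κ ∧ _}) ⟨Order.succ (max ℵ₀ #X), ?_⟩
  refine ⟨(le_max_left _ _).trans (Order.le_succ _), fun A a ha => ⟨A, Subset.rfl, ?_, ha⟩⟩
  exact Order.lt_succ_of_le ((mk_set_le A).trans (le_max_right _ _))

variable {cl}

theorem aleph0_lt_kappaCard {A : Set X} {a : X} (ha : a ∈ cl A)
    (hfin : ∀ B ⊆ A, B.Finite → a ∉ cl B) : ℵ₀ < kappaCard cl := by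
  obtain ⟨hinf, hκ⟩ := kappaCard_spec cl
  refine hinf.lt_of_ne fun heq => ?_
  obtain ⟨B, hBA, hB, haB⟩ := hκ A a ha
  rw [← heq, lt_aleph0_iff_set_finite] at hB
  exact hfin B hBA hB haB

end ClosureSpace

section LexProduct

variable {α β : Type*} [Preorder α] [Preorder β]

instance noMinOrder_lex_of_right [NoMinOrder β] : NoMinOrder (α ×ₗ β) where
  exists_lt x := by
    obtain ⟨b, hb⟩ := exists_lt (ofLex x).2
    exact ⟨toLex ((ofLex x).1, b), Prod.Lex.lt_iff.2 (Or.inr ⟨rfl, hb⟩)⟩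

theorem countable_Iio_lex [Countable β] {x : α ×ₗ β} (h : (Iic (ofLex x).1).Countable) :
    (Iio x).Countable := by
  refine ((h.prod (countable_univ (α := β))).preimage ofLex.injective).mono fun y hy => ?_
  exact ⟨Prod.Lex.monotone_fst_ofLex (le_of_lt hy), mem_univ _⟩

end LexProduct

section OrderAutomorphism

variable {α : Type*} [LinearOrder α]

open Classical in
theorem strictMono_ofSubtype {U : Set α} [hU : U.OrdConnected] (s : U ≃o U) :
    StrictMono (Equiv.Perm.ofSubtype (p := (· ∈ U)) s.toEquiv) := by
  set f := Equiv.Perm.ofSubtype (p := (· ∈ U)) s.toEquiv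
  have f_mem (x : U) : f x = s x := Equiv.Perm.ofSubtype_apply_coe _ x
  have f_notMem {x : α} (hx : x ∉ U) : f x = x := Equiv.Perm.ofSubtype_apply_of_not_mem _ hx
  intro x y hxy
  by_cases hx : x ∈ U <;> by_cases hy : y ∈ U
  · rw [f_mem ⟨x, hx⟩, f_mem ⟨y, hy⟩]
    exact s.strictMono (Subtype.mk_lt_mk.2 hxy)
  · rw [f_mem ⟨x, hx⟩, f_notMem hy]
    exact lt_of_not_ge fun h => hy (hU.out hx (s ⟨x, hx⟩).2 ⟨hxy.le, h⟩)
  · rw [f_notMem hx, f_mem ⟨y, hy⟩]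
    exact lt_of_not_ge fun h => hx (hU.out (s ⟨y, hy⟩).2 hy ⟨h, hxy.le⟩)
  · rwa [f_notMem hx, f_notMem hy]

theorem exists_orderIso_extending {U : Set α} [U.OrdConnected] (s : U ≃o U) :
    ∃ f : α ≃o α, (∀ x ∉ U, f x = x) ∧ ∀ x : U, f x = s x := by
  classical
  exact ⟨(strictMono_ofSubtype s).orderIsoOfSurjective _ (Equiv.surjective _),
    fun _ hx => Equiv.Perm.ofSubtype_apply_of_not_mem _ hx,
    fun x => Equiv.Perm.ofSubtype_apply_coe _ x⟩

-- By Cantor's theorem the order is isomorphic to `ℚ`, where a translation carries `a` to `b`.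
theorem exists_orderIso_apply_eq [Countable α] [DenselyOrdered α] [NoMinOrder α] [NoMaxOrder α]
    (a b : α) : ∃ s : α ≃o α, s a = b := by
  have : Nonempty α := ⟨a⟩
  obtain ⟨e⟩ := Order.iso_of_countable_dense α ℚ
  exact ⟨(e.trans (OrderIso.addRight (e b - e a))).trans e.symm, by simp⟩

theorem exists_orderIso_fixing_compl {U : Set α} [U.OrdConnected] [Countable U]
    [DenselyOrdered U] [NoMinOrder U] [NoMaxOrder U] {a b : α} (ha : a ∈ U) (hb : b ∈ U) :
    ∃ f : α ≃o α, (∀ x ∉ U, f x = x) ∧ f a = b := by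
  obtain ⟨s, hs⟩ := exists_orderIso_apply_eq (⟨a, ha⟩ : U) ⟨b, hb⟩
  obtain ⟨f, hf_compl, hf⟩ := exists_orderIso_extending s
  exact ⟨f, hf_compl, by rw [hf ⟨a, ha⟩, hs]⟩

end OrderAutomorphism

theorem mk_lowerClosure_le {α : Type u} [Preorder α] {κ : Cardinal.{u}}
    (h : ∀ x : α, #(Iic x) ≤ κ) (A : Set α) : #(lowerClosure A) ≤ #A * κ := by
  rw [← SetLike.coe_sort_coe, coe_lowerClosure]
  calc #(⋃ a ∈ A, Iic a : Set α) ≤ #A * ⨆ a : A, #(Iic (a : α)) := mk_biUnion_le _ _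
    _ ≤ #A * κ := by gcongr; exact ciSup_le' fun a => h a

/-- The closure operator `cl₂` of an order: a point belongs to `cutClosure A` when all its strict
predecessors lie in the downward closure of `A`. The downward closure itself need not be added,
since the strict predecessors of its points lie in it. -/
def cutClosure {α : Type*} [Preorder α] (A : Set α) : Set α :=
  {b | Iio b ⊆ lowerClosure A}

section Preorder

variable {α : Type u} [Preorder α]

theorem lowerClosure_subset_cutClosure (A : Set α) : (lowerClosure A : Set α) ⊆ cutClosure A :=
  fun _ hb _ hy => (lowerClosure A).lower (le_of_lt hy) hb

theorem subset_cutClosure (A : Set α) : A ⊆ cutClosure A :=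
  subset_lowerClosure.trans (lowerClosure_subset_cutClosure A)

theorem isLowerSet_cutClosure (A : Set α) : IsLowerSet (cutClosure A) :=
  fun _ _ hyx hx => (Iio_subset_Iio hyx).trans hx

theorem mem_cutClosure_of_forall_lt [DenselyOrdered α] {A : Set α} {b : α}
    (h : ∀ y < b, y ∈ cutClosure A) : b ∈ cutClosure A := by
  intro y hyb
  obtain ⟨z, hyz, hzb⟩ := exists_between hyb
  exact h z hzb hyz

theorem exists_lt_notMem_cutClosure [DenselyOrdered α] {A : Set α} {b : α}
    (hb : b ∉ cutClosure A) : ∃ y < b, y ∉ cutClosure A := by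
  contrapose! hb
  exact mem_cutClosure_of_forall_lt hb

theorem isClosure_cutClosure [DenselyOrdered α] : IsClosure (cutClosure (α := α)) := by
  refine ⟨subset_cutClosure, fun A B hAB b hb => mem_cutClosure_of_forall_lt fun y hyb => ?_⟩
  exact lowerClosure_min hAB (isLowerSet_cutClosure B) (hb hyb)

theorem cutClosure_empty [NoMinOrder α] : cutClosure (∅ : Set α) = ∅ := by
  simp [cutClosure, subset_empty_iff]

theorem mem_cutClosure_Iio (a : α) : a ∈ cutClosure (Iio a) :=
  subset_lowerClosure

theorem image_cutClosure {β : Type*} [Preorder β] (f : α ≃o β) (A : Set α) :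
    f '' cutClosure A = cutClosure (f '' A) := by
  ext x
  obtain ⟨b, rfl⟩ := f.surjective x
  rw [f.injective.mem_set_image]
  change Iio b ⊆ lowerClosure A ↔ Iio (f b) ⊆ lowerClosure (f '' A)
  rw [lowerClosure_image, LowerSet.coe_map, ← f.image_Iio, image_subset_image_iff f.injective]

theorem isAuto_cutClosure_of_orderIso (f : α ≃o α) : IsAuto cutClosure f :=
  ⟨f.bijective, image_cutClosure f⟩

theorem exists_subset_mk_le_mk_Iio_mem_cutClosure {A : Set α} {a : α} (ha : a ∈ cutClosure A) :
    ∃ A₀, A₀ ⊆ A ∧ #A₀ ≤ #(Iio a) ∧ a ∈ cutClosure A₀ := by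
  choose g hgA hg using fun y : Iio a => mem_lowerClosure.1 (ha y.2)
  exact ⟨range g, range_subset_iff.2 hgA, mk_range_le,
    fun y hy => mem_lowerClosure.2 ⟨g ⟨y, hy⟩, mem_range_self _, hg ⟨y, hy⟩⟩⟩

theorem kappaCard_cutClosure_le {κ : Cardinal.{u}} (hκ : ℵ₀ ≤ κ) (h : ∀ x : α, #(Iio x) < κ) :
    kappaCard (cutClosure (α := α)) ≤ κ := by
  refine csInf_le' ⟨hκ, fun A a ha => ?_⟩
  obtain ⟨A₀, hA₀, hcard, ha₀⟩ := exists_subset_mk_le_mk_Iio_mem_cutClosure ha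
  exact ⟨A₀, hA₀, hcard.trans_lt (h a), ha₀⟩

end Preorder

section LinearOrder

variable {α : Type u} [LinearOrder α]

theorem cutClosure_singleton [DenselyOrdered α] (a : α) : cutClosure {a} = Iic a := by
  ext b
  simp [cutClosure, Iio_subset_Iic_iff]

theorem not_exchOver_cutClosure_empty [DenselyOrdered α] [NoMinOrder α] [Nonempty α] :
    ¬ ExchOver (cutClosure (α := α)) ∅ := by
  intro hexch
  obtain ⟨b⟩ := ‹Nonempty α›
  obtain ⟨a, hab⟩ := exists_lt b
  have hba : b ∈ cutClosure (∅ ∪ {a}) :=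
    hexch a b (by simpa [cutClosure_singleton] using hab.le) (by simp [cutClosure_empty])
  rw [empty_union, cutClosure_singleton] at hba
  exact hab.not_ge hba

theorem notMem_cutClosure_of_finite [DenselyOrdered α] [NoMinOrder α] {a : α} {B : Set α}
    (hBa : B ⊆ Iio a) (hB : B.Finite) : a ∉ cutClosure B := by
  rcases B.eq_empty_or_nonempty with rfl | hne
  · simp [cutClosure_empty]
  obtain ⟨m, hmB, hm⟩ := exists_max_image B id hB hne
  have hBm : cutClosure B ⊆ Iic m := by
    rw [← cutClosure_singleton]
    exact isClosure_cutClosure.2 B {m} ((cutClosure_singleton m).symm ▸ hm)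
  exact fun ha => (hBa hmB).not_ge (hBm ha)

theorem kappaCard_cutClosure_eq_aleph_one [DenselyOrdered α] [NoMinOrder α] [Nonempty α]
    (h : ∀ x : α, (Iio x).Countable) : kappaCard (cutClosure (α := α)) = aleph 1 := by
  obtain ⟨a⟩ := ‹Nonempty α›
  rw [← succ_aleph0]
  apply le_antisymm
  · exact kappaCard_cutClosure_le (Order.le_succ _) fun x =>
      Order.lt_succ_of_le (h x).le_aleph0
  · exact Order.succ_le_of_lt <|
      aleph0_lt_kappaCard (mem_cutClosure_Iio a) fun _ => notMem_cutClosure_of_finite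

theorem subsingleton_cutClosure_diff_lowerClosure (A : Set α) :
    (cutClosure A \ lowerClosure A).Subsingleton := by
  intro x hx y hy
  by_contra hne
  rcases lt_or_gt_of_ne hne with hxy | hyx
  · exact hx.2 (hy.1 hxy)
  · exact hy.2 (hx.1 hyx)

theorem mk_cutClosure_le_mk_lowerClosure_add_one (A : Set α) :
    #(cutClosure A) ≤ #(lowerClosure A) + 1 := by
  rw [← union_sdiff_cancel (lowerClosure_subset_cutClosure A)]
  exact (mk_union_le _ _).trans
    (add_le_add_right (subsingleton_cutClosure_diff_lowerClosure A).cardinalMk_le_one _)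

theorem mk_cutClosure_le_add {κ : Cardinal.{u}} (hκ : ℵ₀ ≤ κ) (h : ∀ x : α, #(Iic x) ≤ κ)
    (A : Set α) : #(cutClosure A) ≤ #A + κ := by
  have hinf : ℵ₀ ≤ #A + κ := hκ.trans (self_le_add_left _ _)
  calc #(cutClosure A) ≤ #A * κ + 1 :=
        (mk_cutClosure_le_mk_lowerClosure_add_one A).trans
          (add_le_add_left (mk_lowerClosure_le h A) 1)
    _ ≤ #A + κ := add_le_of_le hinf (mul_le_of_le hinf (self_le_add_right _ _)
        (self_le_add_left _ _)) (one_le_aleph0.trans hinf)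

theorem LSCard_cutClosure_le {κ : Cardinal.{u}} (hκ : ℵ₀ ≤ κ) (h : ∀ x : α, #(Iic x) ≤ κ) :
    LSCard (cutClosure (α := α)) ≤ κ :=
  csInf_le' ⟨hκ, mk_cutClosure_le_add hκ h⟩

theorem LSCard_cutClosure_eq_aleph0 (h : ∀ x : α, (Iio x).Countable) :
    LSCard (cutClosure (α := α)) = ℵ₀ := by
  refine le_antisymm (LSCard_cutClosure_le le_rfl fun x => ?_) (aleph0_le_LSCard _)
  rw [← Iio_insert]
  exact ((h x).insert x).le_aleph0

-- `a` and `b` lie in the countable interval `U` of points outside the closure of `A` and below a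
-- common upper bound. A least element of `U` would be a limit of points of the closure, so `U` is
-- isomorphic to `ℚ`.
theorem isHomog_cutClosure [DenselyOrdered α] [NoMaxOrder α] (h : ∀ x : α, (Iio x).Countable)
    (μ : Cardinal.{u}) : IsHomog (cutClosure (α := α)) μ := by
  intro A _ a b ha hb
  obtain ⟨c, hc⟩ := exists_gt (max a b)
  rw [max_lt_iff] at hc
  let U : Set α := (cutClosure A)ᶜ ∩ Iio c
  have : U.OrdConnected := (isLowerSet_cutClosure A).compl.ordConnected.inter ordConnected_Iio
  have : Countable U := ((h c).mono inter_subset_right).to_subtype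
  have : NoMaxOrder U := ⟨fun ⟨x, hxA, hxc⟩ => by
    obtain ⟨z, hxz, hzc⟩ := exists_between hxc
    exact ⟨⟨z, (isLowerSet_cutClosure A).compl hxz.le hxA, hzc⟩, hxz⟩⟩
  have : NoMinOrder U := ⟨fun ⟨x, hxA, hxc⟩ => by
    obtain ⟨y, hyx, hyA⟩ := exists_lt_notMem_cutClosure hxA
    exact ⟨⟨y, hyA, hyx.trans hxc⟩, hyx⟩⟩
  obtain ⟨f, hf_compl, hfab⟩ :=
    exists_orderIso_fixing_compl (U := U) ⟨ha, hc.1⟩ ⟨hb, hc.2⟩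
  have hf_fix (x : α) (hx : x ∈ A) : f x = x :=
    hf_compl x fun hxU => hxU.1 (subset_cutClosure A hx)
  exact ⟨f, isAuto_cutClosure_of_orderIso f, hf_fix, hfab⟩

end LinearOrder

/-- The set `ℚ × ω₁` in the reverse lexicographic order, encoded as the lexicographic product with
the factors exchanged. -/
abbrev RatOmegaOne : Type := (aleph 1 : Cardinal.{0}).ord.ToType ×ₗ ℚ

namespace RatOmegaOne

theorem cardinalMk : #RatOmegaOne = aleph 1 := by
  rw [mk_congr ofLex]
  simp

theorem countable_Iio (x : RatOmegaOne) : (Iio x).Countable := by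
  have hIio : (Iio (ofLex x).1).Countable := by
    rw [← le_aleph0_iff_set_countable, ← Order.lt_succ_iff, succ_aleph0]
    simpa using mk_Iio_lt (ofLex x).1
  exact countable_Iio_lex (Iio_insert (a := (ofLex x).1) ▸ hIio.insert _)

instance : Nonempty RatOmegaOne :=
  mk_ne_zero_iff.1 (cardinalMk ▸ (aleph_pos 1).ne')

end RatOmegaOne

/-- There is a closure space of cardinality `ℵ₁` which is `ℵ₁`-homogeneous, has
`∅` closed, `LS(W) = ℵ₀`, `κ(W) = ℵ₁`, and fails exchange over `∅`. -/
theorem stmt14 : ∃ (X : Type) (cl : Set X → Set X), IsClosure cl ∧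
    #X = Cardinal.aleph 1 ∧ IsHomog cl (Cardinal.aleph 1) ∧ cl ∅ = ∅ ∧
    LSCard cl = ℵ₀ ∧ kappaCard cl = Cardinal.aleph 1 ∧ ¬ ExchOver cl ∅ := by
  have hIio := RatOmegaOne.countable_Iio
  exact ⟨RatOmegaOne, cutClosure, isClosure_cutClosure, RatOmegaOne.cardinalMk,
    isHomog_cutClosure hIio _, cutClosure_empty, LSCard_cutClosure_eq_aleph0 hIio,
    kappaCard_cutClosure_eq_aleph_one hIio, not_exchOver_cutClosure_empty⟩
end

section
/- Let K be a quasiminimal abstract elementary class. Then the restriction of K to countable models has amalgamation and joint embedding: (amalgamation) for all countable M, N₁, N₂ ∈ K with M ≤ₖ N₁ and M ≤ₖ N₂ there exist N ∈ K and K-embeddings f₁ : N₁ → N and f₂ : N₂ → N both fixing M pointwise; (joint embedding) for all countable N₁, N₂ ∈ K there exist N ∈ K and K-embeddings f₁ : N₁ → N and f₂ : N₂ → N. -/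
open Cardinal Set FirstOrder

universe u

/-- A `τ`-structure whose universe is a subset of a fixed domain `Ω`. -/
def ModelOn (L : FirstOrder.Language.{u, u}) (Ω : Type u) : Type u :=
  Σ s : Set Ω, L.Structure s

variable {L : FirstOrder.Language.{u, u}} {Ω : Type u}

noncomputable instance modelStr (M : ModelOn L Ω) : L.Structure ↥M.1 := M.2

/-- `M` is a substructure of `N`: the universe of `M` is a subset of that of `N`
and the inclusion map is an `L`-embedding. -/
def ModelOn.IsSub (M N : ModelOn L Ω) : Prop :=
  M.1 ⊆ N.1 ∧ ∃ e : ↥M.1 ↪[L] ↥N.1, ∀ x : ↥M.1, (e x : Ω) = (x : Ω)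

/-- An abstract elementary class whose models have universes contained in `Ω`. -/
structure AECStr (L : FirstOrder.Language.{u, u}) (Ω : Type u) where
  /-- the class of models -/
  mem : Set (ModelOn L Ω)
  /-- the strong substructure relation `≤ₖ` -/
  le : ModelOn L Ω → ModelOn L Ω → Prop
  /-- the Löwenheim-Skolem-Tarski number -/
  LS : Cardinal.{u}
  le_refl : ∀ M ∈ mem, le M M
  le_antisymm : ∀ {M N}, le M N → le N M → M = N
  le_trans : ∀ {M N P}, le M N → le N P → le M P
  le_mem_left : ∀ {M N}, le M N → M ∈ mem
  le_mem_right : ∀ {M N}, le M N → N ∈ mem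
  /-- `M ≤ₖ N` implies that `M` is a substructure of `N` -/
  le_isSub : ∀ {M N}, le M N → ModelOn.IsSub M N
  /-- `K` and `≤ₖ` respect isomorphisms: if `M ≤ₖ N` and `f : N ≅ N'`, then
  `f[M] ≤ₖ N'` (phrased as: there is `M' ≤ₖ N'` and an isomorphism `g : M ≅ M'`
  agreeing with `f` on `M`). -/
  iso_resp : ∀ {M N N' : ModelOn L Ω}, le M N → ∀ f : ↥N.1 ≃[L] ↥N'.1,
    ∃ (M' : ModelOn L Ω) (g : ↥M.1 ≃[L] ↥M'.1), le M' N' ∧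
      ∀ (x : ↥M.1) (y : ↥N.1), (y : Ω) = (x : Ω) → ((g x : Ω)) = ((f y : Ω))
  /-- coherence -/
  coherence : ∀ {M₀ M₁ M₂}, le M₀ M₂ → le M₁ M₂ → M₀.1 ⊆ M₁.1 → le M₀ M₁
  /-- Tarski-Vaught chain axioms: a `≤ₖ`-directed system has a union which is in
  the class, lies above every member of the system, and is below any common
  extension of the system. -/
  chain_union : ∀ {ι : Type u} (Mi : ι → ModelOn L Ω), Nonempty ι →
    (∀ i j : ι, ∃ k, le (Mi i) (Mi k) ∧ le (Mi j) (Mi k)) →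
    ∃ M : ModelOn L Ω, M.1 = ⋃ i, (Mi i).1 ∧ (∀ i, le (Mi i) M) ∧
      ∀ N, (∀ i, le (Mi i) N) → le M N
  /-- `LS ≥ |τ| + ℵ₀` -/
  LS_ge : L.card + ℵ₀ ≤ LS
  /-- the Löwenheim-Skolem-Tarski axiom -/
  LST : ∀ M ∈ mem, ∀ A : Set Ω, A ⊆ M.1 →
    ∃ M₀, le M₀ M ∧ A ⊆ M₀.1 ∧ #M₀.1 ≤ #A + LS
  /-- `LS` is the least such cardinal -/
  LS_min : ∀ μ : Cardinal.{u}, L.card + ℵ₀ ≤ μ →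
    (∀ M ∈ mem, ∀ A : Set Ω, A ⊆ M.1 →
      ∃ M₀, le M₀ M ∧ A ⊆ M₀.1 ∧ #M₀.1 ≤ #A + μ) → LS ≤ μ

/-- `cl^N(A)`: the intersection of the universes of all `M ≤ₖ N` containing `A`. -/
def aecCl (K : AECStr L Ω) (N : ModelOn L Ω) (A : Set Ω) : Set Ω :=
  {x : Ω | ∀ M : ModelOn L Ω, K.le M N → A ⊆ M.1 → x ∈ M.1}

/-- `N` admits intersections: for every `A ⊆ |N|`, `cl^N(A)` is the universe of
some `M ≤ₖ N`. -/
def AdmitsInter (K : AECStr L Ω) (N : ModelOn L Ω) : Prop :=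
  ∀ A : Set Ω, A ⊆ N.1 → ∃ M : ModelOn L Ω, K.le M N ∧ M.1 = aecCl K N A

/-- There is a `K`-embedding of `M` into `N` fixing `F` pointwise: an isomorphism
from `M` onto some `M' ≤ₖ N` which is the identity on `F`. -/
def KEmbedFixing (K : AECStr L Ω) (M N : ModelOn L Ω) (F : Set Ω) : Prop :=
  ∃ M' : ModelOn L Ω, K.le M' N ∧
    ∃ g : ↥M.1 ≃[L] ↥M'.1, ∀ x : ↥M.1, (x : Ω) ∈ F → ((g x : Ω)) = (x : Ω)

/-- Uniqueness of the generic type, via the characterization of Galois types in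
classes admitting intersections: whenever `M ≤ₖ N₁`, `M ≤ₖ N₂` are countable
and `a₁ ∈ |N₁| \ |M|`, `a₂ ∈ |N₂| \ |M|`, there is an isomorphism from
`cl^{N₁}(|M| ∪ {a₁})` onto `cl^{N₂}(|M| ∪ {a₂})` fixing `M` pointwise and
sending `a₁` to `a₂`. -/
def GenericUnique (K : AECStr L Ω) : Prop :=
  ∀ M N₁ N₂ : ModelOn L Ω, K.le M N₁ → K.le M N₂ →
    #N₁.1 ≤ ℵ₀ → #N₂.1 ≤ ℵ₀ →
    ∀ a₁ a₂ : Ω, a₁ ∈ N₁.1 \ M.1 → a₂ ∈ N₂.1 \ M.1 →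
    ∃ M₁ M₂ : ModelOn L Ω, K.le M₁ N₁ ∧ K.le M₂ N₂ ∧
      M₁.1 = aecCl K N₁ (M.1 ∪ {a₁}) ∧ M₂.1 = aecCl K N₂ (M.1 ∪ {a₂}) ∧
      ∃ g : ↥M₁.1 ≃[L] ↥M₂.1,
        (∀ x : ↥M₁.1, (x : Ω) ∈ M.1 → ((g x : Ω)) = (x : Ω)) ∧
        (∀ x : ↥M₁.1, (x : Ω) = a₁ → ((g x : Ω)) = a₂)

/-- A quasiminimal AEC: countable `LS`, a prime model, countable models admit
intersections, and uniqueness of the generic type over countable models. -/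
def IsQuasiminimal (K : AECStr L Ω) : Prop :=
  K.LS = ℵ₀ ∧
  (∃ M ∈ K.mem, ∀ N ∈ K.mem, KEmbedFixing K M N ∅) ∧
  (∀ N ∈ K.mem, #N.1 ≤ ℵ₀ → AdmitsInter K N) ∧
  GenericUnique K

/-!
Given countable `N₁` and `N₂` and an isomorphism `f` between strong submodels of them, consider the
isomorphisms between strong submodels of `N₁` and `N₂` that extend `f`. By the Tarski–Vaught axioms
Zorn's lemma yields a maximal one, `P ≅ Q`. If there were `a₁ ∈ N₁ \ P` and `a₂ ∈ N₂ \ Q`, renaming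
`N₁` along `P ≅ Q` would make `Q` a strong submodel of both models, and uniqueness of the generic
type would extend the isomorphism to `cl(P ∪ {a₁}) ≅ cl(Q ∪ {a₂})`. Hence `P = N₁` or `Q = N₂`: of
the two models, one embeds into the other over `f`. For amalgamation start with the identity of the
common submodel, for joint embedding with the isomorphism between two copies of the prime model.

All models live inside the fixed set `Ω`, so the renamed copy of `N₁` needs room there. It is found
inside `N₂` when `|N₁ \ P| ≤ |N₂ \ Q|`; otherwise the roles of `N₁` and `N₂` are exchanged.
-/

theorem exists_embedding_extending {α β : Type*} {s : Set α} {t : Set β} (e : s ≃ t)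
    (j : ↥sᶜ ↪ ↥tᶜ) :
    ∃ H : α ↪ β, (∀ x : s, H x = e x) ∧ ∀ x ∉ s, H x ∉ t := by
  classical
  refine ⟨(Equiv.Set.sumCompl s).symm.toEmbedding.trans
    ((e.toEmbedding.sumMap j).trans (Equiv.Set.sumCompl t).toEmbedding),
    fun x => ?_, fun x hx => ?_⟩
  · simp
  · have hj : (j ⟨x, hx⟩ : β) ∉ t := (j ⟨x, hx⟩).2
    simpa [Equiv.Set.sumCompl_symm_apply_of_notMem hx] using hj

theorem partialEquiv_le_of_forall_exists {A B : Type*} [L.Structure A] [L.Structure B]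
    {f g : A ≃ₚ[L] B}
    (h : ∀ x : f.dom, ∃ y : g.dom, (y : A) = x ∧ (g.toEquiv y : B) = f.toEquiv x) : f ≤ g := by
  have hdom : f.dom ≤ g.dom := fun x hx => by
    obtain ⟨y, rfl, -⟩ := h ⟨x, hx⟩
    exact y.2
  refine (Language.PartialEquiv.le_def f g).2 ⟨hdom, Language.Embedding.ext fun x => ?_⟩
  obtain ⟨y, hyx, hy⟩ := h x
  obtain rfl : y = Language.Substructure.inclusion hdom x := Subtype.ext hyx
  exact hy

namespace ModelOn

variable {M N : ModelOn L Ω}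

theorem fst_eq_of_equiv (φ : ↥M.1 ≃[L] ↥N.1) (hφ : ∀ x, (φ x : Ω) = x) : M.1 = N.1 := by
  ext x
  constructor
  · intro hx
    have h : (φ ⟨x, hx⟩ : Ω) = x := hφ _
    exact h ▸ (φ ⟨x, hx⟩).2
  · intro hx
    have h : x = φ.symm ⟨x, hx⟩ := by rw [← hφ, Language.Equiv.apply_symm_apply]
    exact h ▸ (φ.symm ⟨x, hx⟩).2

open Language.Structure in
theorem ext_of_equiv (φ : ↥M.1 ≃[L] ↥N.1) (hφ : ∀ x, (φ x : Ω) = x) : M = N := by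
  have hfst : M.1 = N.1 := fst_eq_of_equiv φ hφ
  have map_fun : ∀ {n} (f : L.Functions n) x, φ (funMap f x) = funMap f (φ ∘ x) := φ.map_fun
  have map_rel : ∀ {n} (R : L.Relations n) x, RelMap R (φ ∘ x) ↔ RelMap R x := φ.map_rel
  obtain ⟨s, p⟩ := M
  obtain ⟨t, q⟩ := N
  obtain rfl : s = t := hfst
  have hid : ∀ x, φ x = x := fun x => Subtype.ext (hφ x)
  have hcomp : ∀ {n : ℕ} (x : Fin n → s), φ ∘ x = x := fun x => funext fun i => hid (x i)
  congr 1
  refine Language.Structure.ext ?_ ?_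
  · funext n f x
    exact (hid _).symm.trans ((map_fun f x).trans (congrArg _ (hcomp x)))
  · funext n R x
    exact (propext (map_rel R x)).symm.trans (congrArg _ (hcomp x))

/-- The copy of an `L`-structure `A` on the range of an injection `H : A ↪ Ω`, with the structure
transported along `H`. -/
noncomputable def copy {A : Type u} [L.Structure A] (H : A ↪ Ω) : ModelOn L Ω :=
  ⟨range H, (Equiv.ofInjective H H.injective).inducedStructure⟩

/-- The isomorphism from `A` onto its copy along `H`, given by `H`. -/
noncomputable def copyEquiv {A : Type u} [L.Structure A] (H : A ↪ Ω) :
    A ≃[L] ↥(copy (L := L) H).1 :=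
  (Equiv.ofInjective H H.injective).inducedStructureEquiv

/-- A substructure of (the structure on the universe of) `N`, regarded as a model in its own
right; every submodel of `N` arises in this way. -/
noncomputable def restrict (N : ModelOn L Ω) (S : L.Substructure ↥N.1) : ModelOn L Ω :=
  copy (S.subtype.toEmbedding.trans (Function.Embedding.subtype _))

/-- The identity map from a substructure `S` of `N` to the model it determines. -/
noncomputable def restrictEquiv (N : ModelOn L Ω) (S : L.Substructure ↥N.1) :
    S ≃[L] ↥(N.restrict S).1 :=
  copyEquiv _

theorem coe_restrictEquiv (S : L.Substructure ↥N.1) (x : S) : (N.restrictEquiv S x : Ω) = x :=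
  rfl

theorem coe_restrictEquiv_symm (S : L.Substructure ↥N.1) (x : ↥(N.restrict S).1) :
    ((N.restrictEquiv S).symm x : Ω) = x := by
  rw [← coe_restrictEquiv, Language.Equiv.apply_symm_apply]

theorem fst_restrict (S : L.Substructure ↥N.1) : (N.restrict S).1 = (↑) '' (S : Set ↥N.1) := by
  change range (fun x : S => ((x : ↥N.1) : Ω)) = _
  rw [← Subtype.range_coe (s := (S : Set ↥N.1)), ← range_comp]
  rfl

theorem coe_mem_restrict {S : L.Substructure ↥N.1} {x : ↥N.1} :
    (x : Ω) ∈ (N.restrict S).1 ↔ x ∈ S := by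
  rw [fst_restrict, Subtype.val_injective.mem_set_image, SetLike.mem_coe]

theorem IsSub.exists_eq_restrict (h : M.IsSub N) : ∃ S : L.Substructure ↥N.1, M = N.restrict S := by
  obtain ⟨-, e, he⟩ := h
  exact ⟨e.toHom.range, ext_of_equiv ((N.restrictEquiv _).comp e.equivRange) he⟩

theorem IsSub.eq_restrict (h : M.IsSub N) {S : L.Substructure ↥N.1}
    (hS : M.1 = (↑) '' (S : Set ↥N.1)) : M = N.restrict S := by
  obtain ⟨T, rfl⟩ := h.exists_eq_restrict
  rw [fst_restrict] at hS
  rw [SetLike.coe_injective (Subtype.val_injective.image_injective hS)]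

end ModelOn

namespace AECStr

variable {K : AECStr L Ω} {M M' N N' M₁ M₂ N₁ N₂ : ModelOn L Ω}

theorem le_of_equiv (h : K.le M N) (φ : ↥N.1 ≃[L] ↥N'.1) (g : ↥M.1 ≃[L] ↥M'.1)
    (hg : ∀ (x : ↥M.1) (y : ↥N.1), (y : Ω) = x → (g x : Ω) = φ y) : K.le M' N' := by
  obtain ⟨M'', k, hM'', hk⟩ := K.iso_resp h φ
  suffices M'' = M' from this ▸ hM''
  refine ModelOn.ext_of_equiv (g.comp k.symm) fun x => ?_
  let y : ↥N.1 := ⟨k.symm x, (K.le_isSub h).1 (k.symm x).2⟩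
  calc (g (k.symm x) : Ω) = φ y := hg _ y rfl
    _ = k (k.symm x) := (hk _ y rfl).symm
    _ = x := by rw [Language.Equiv.apply_symm_apply]

/-- A substructure `S` of `N` is strong if, as a model, it satisfies `S ≤ₖ N`. -/
def IsStrong (K : AECStr L Ω) (S : L.Substructure ↥N.1) : Prop :=
  K.le (N.restrict S) N

theorem IsStrong.iSup {ι : Type u} [Nonempty ι] {S : ι → L.Substructure ↥N.1}
    (hS : ∀ i, K.IsStrong (S i)) (hdir : Directed (· ≤ ·) S) : K.IsStrong (⨆ i, S i) := by
  have le_of_le : ∀ i j, S i ≤ S j → K.le (N.restrict (S i)) (N.restrict (S j)) := fun i j hij =>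
    K.coherence (hS i) (hS j) <| by
      simpa only [ModelOn.fst_restrict] using image_mono hij
  obtain ⟨U, hU, -, hmin⟩ := K.chain_union (fun i => N.restrict (S i)) inferInstance fun i j =>
    let ⟨k, hik, hjk⟩ := hdir i j
    ⟨k, le_of_le i k hik, le_of_le j k hjk⟩
  have hUN : K.le U N := hmin N hS
  have hcoe : ((⨆ i, S i : L.Substructure ↥N.1) : Set ↥N.1) = ⋃ i, (S i : Set ↥N.1) := by
    ext x
    simp only [SetLike.mem_coe, Language.Substructure.mem_iSup_of_directed hdir, mem_iUnion]
  have hU' : U = N.restrict (⨆ i, S i) :=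
    (K.le_isSub hUN).eq_restrict <| by simp only [hU, ModelOn.fst_restrict, hcoe, image_iUnion]
  rwa [hU'] at hUN

/-- A partial `K`-isomorphism between `N₁` and `N₂`: a partial equivalence whose domain and
codomain are strong. -/
structure IsPartialIso (K : AECStr L Ω) (f : ↥N₁.1 ≃ₚ[L] ↥N₂.1) : Prop where
  dom : K.IsStrong f.dom
  cod : K.IsStrong f.cod

theorem IsPartialIso.symm {f : ↥N₁.1 ≃ₚ[L] ↥N₂.1} (hf : K.IsPartialIso f) :
    K.IsPartialIso f.symm :=
  ⟨hf.cod, hf.dom⟩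

theorem exists_isPartialIso (h₁ : K.le M₁ N₁) (h₂ : K.le M₂ N₂) (g : ↥M₁.1 ≃[L] ↥M₂.1) :
    ∃ f : ↥N₁.1 ≃ₚ[L] ↥N₂.1, K.IsPartialIso f ∧
      ∀ x : ↥M₁.1, ∃ y : f.dom, (y : Ω) = x ∧ (f.toEquiv y : Ω) = g x := by
  obtain ⟨S₁, rfl⟩ := (K.le_isSub h₁).exists_eq_restrict
  obtain ⟨S₂, rfl⟩ := (K.le_isSub h₂).exists_eq_restrict
  refine ⟨⟨S₁, S₂, (N₂.restrictEquiv S₂).symm.comp (g.comp (N₁.restrictEquiv S₁))⟩, ⟨h₁, h₂⟩,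
    fun x => ⟨(N₁.restrictEquiv S₁).symm x, ModelOn.coe_restrictEquiv_symm S₁ x, ?_⟩⟩
  simp only [Language.Equiv.comp_apply, ModelOn.coe_restrictEquiv_symm,
    Language.Equiv.apply_symm_apply]

theorem IsPartialIso.exists_ge_of_isChain {c : Set (↥N₁.1 ≃ₚ[L] ↥N₂.1)}
    (hc : ∀ f ∈ c, K.IsPartialIso f) (hchain : IsChain (· ≤ ·) c) (hne : c.Nonempty) :
    ∃ g, K.IsPartialIso g ∧ ∀ f ∈ c, f ≤ g := by
  have : Nonempty c := hne.to_subtype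
  have : IsDirectedOrder c := ⟨hchain.directedOn.directed_val⟩
  let S : c →o (↥N₁.1 ≃ₚ[L] ↥N₂.1) := OrderHom.Subtype.val (· ∈ c)
  have hdom : Monotone fun i => (S i).dom := Language.PartialEquiv.monotone_dom.comp S.monotone
  have hcod : Monotone fun i => (S i).cod := Language.PartialEquiv.monotone_cod.comp S.monotone
  exact ⟨Language.DirectLimit.partialEquivLimit S,
    ⟨IsStrong.iSup (fun i => (hc i i.2).dom) hdom.directed_le,
      IsStrong.iSup (fun i => (hc i i.2).cod) hcod.directed_le⟩,
    fun f hf => Language.DirectLimit.le_partialEquivLimit S ⟨f, hf⟩⟩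

theorem IsPartialIso.exists_le_maximal {f : ↥N₁.1 ≃ₚ[L] ↥N₂.1} (hf : K.IsPartialIso f) :
    ∃ g, f ≤ g ∧ Maximal K.IsPartialIso g :=
  zorn_le_nonempty₀ {g | K.IsPartialIso g}
    (fun _ hc hchain y hy => IsPartialIso.exists_ge_of_isChain hc hchain ⟨y, hy⟩) f hf

theorem IsPartialIso.exists_renaming {f : ↥N₁.1 ≃ₚ[L] ↥N₂.1} (hf : K.IsPartialIso f)
    (j : ↥(f.dom : Set ↥N₁.1)ᶜ ↪ ↥(f.cod : Set ↥N₂.1)ᶜ) :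
    ∃ (N' : ModelOn L Ω) (φ : ↥N₁.1 ≃[L] ↥N'.1), K.le (N₂.restrict f.cod) N' ∧
      (∀ x : f.dom, (φ x : Ω) = f.toEquiv x) ∧
      ∀ x ∉ f.dom, (φ x : Ω) ∉ (N₂.restrict f.cod).1 := by
  obtain ⟨H, hH, hH'⟩ := exists_embedding_extending f.toEquiv.toEquiv j
  let φ := ModelOn.copyEquiv (L := L) (H.trans (Function.Embedding.subtype _))
  have hφ : ∀ x : f.dom, (φ x : Ω) = f.toEquiv x := fun x => congrArg Subtype.val (hH x)
  refine ⟨_, φ, le_of_equiv hf.dom φ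
    ((N₂.restrictEquiv f.cod).comp (f.toEquiv.comp (N₁.restrictEquiv f.dom).symm))
    fun x y hyx => ?_, hφ, fun x hx => ?_⟩
  · let z : f.dom := (N₁.restrictEquiv f.dom).symm x
    obtain rfl : y = z := Subtype.ext (hyx.trans (ModelOn.coe_restrictEquiv_symm _ x).symm)
    exact (hφ z).symm
  · change ((H x : ↥N₂.1) : Ω) ∉ _
    exact fun h => hH' x hx (ModelOn.coe_mem_restrict.1 h)

theorem IsPartialIso.kEmbedFixing_of_dom_eq_top {f : ↥N₁.1 ≃ₚ[L] ↥N₂.1}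
    (hf : K.IsPartialIso f) (htop : f.dom = ⊤) {F : Set Ω}
    (hF : ∀ x ∈ F, ∃ y : f.dom, (y : Ω) = x ∧ (f.toEquiv y : Ω) = x) :
    KEmbedFixing K N₁ N₂ F := by
  obtain ⟨dom, cod, e⟩ := f
  obtain rfl : dom = ⊤ := htop
  refine ⟨N₂.restrict cod, hf.cod,
    (N₂.restrictEquiv cod).comp (e.comp Language.Substructure.topEquiv.symm), fun x hx => ?_⟩
  obtain ⟨y, hyx, hy⟩ := hF x hx
  obtain rfl : (y : ↥N₁.1) = x := Subtype.ext hyx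
  exact hy

end AECStr

theorem subset_aecCl (K : AECStr L Ω) (N : ModelOn L Ω) (A : Set Ω) : A ⊆ aecCl K N A :=
  fun _ hx _ _ hA => hA hx

theorem KEmbedFixing.refl {K : AECStr L Ω} {N : ModelOn L Ω} (hN : N ∈ K.mem) (F : Set Ω) :
    KEmbedFixing K N N F :=
  ⟨N, K.le_refl N hN, Language.Equiv.refl L _, fun _ _ => rfl⟩

theorem exists_common_extension_of_kEmbedFixing {K : AECStr L Ω} {N₁ N₂ : ModelOn L Ω} {F : Set Ω}
    (h : KEmbedFixing K N₁ N₂ F ∨ KEmbedFixing K N₂ N₁ F) :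
    ∃ N ∈ K.mem, KEmbedFixing K N₁ N F ∧ KEmbedFixing K N₂ N F := by
  have mem_of : ∀ {M N}, KEmbedFixing K M N F → N ∈ K.mem := fun ⟨_, h, _⟩ => K.le_mem_right h
  rcases h with h | h
  · exact ⟨N₂, mem_of h, h, .refl (mem_of h) F⟩
  · exact ⟨N₁, mem_of h, .refl (mem_of h) F, h⟩

namespace GenericUnique

open AECStr

variable {K : AECStr L Ω} {M₁ M₂ N₁ N₂ : ModelOn L Ω} {f : ↥N₁.1 ≃ₚ[L] ↥N₂.1}

theorem exists_ge_mem_dom (hG : GenericUnique K) (c₁ : #N₁.1 ≤ ℵ₀) (c₂ : #N₂.1 ≤ ℵ₀)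
    (hf : K.IsPartialIso f) {a₁ : ↥N₁.1} {a₂ : ↥N₂.1} (h₁ : a₁ ∉ f.dom) (h₂ : a₂ ∉ f.cod)
    (j : ↥(f.dom : Set ↥N₁.1)ᶜ ↪ ↥(f.cod : Set ↥N₂.1)ᶜ) :
    ∃ f', K.IsPartialIso f' ∧ f ≤ f' ∧ a₁ ∈ f'.dom := by
  obtain ⟨N', φ, hN', hφ, hφ'⟩ := hf.exists_renaming j
  have c' : #N'.1 ≤ ℵ₀ := (mk_congr φ.toEquiv).ge.trans c₁
  obtain ⟨C₁, C₂, hC₁, hC₂, hcl, -, k, hk, -⟩ := hG _ N' N₂ hN' hf.cod c' c₂ (φ a₁) a₂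
    ⟨(φ a₁).2, hφ' a₁ h₁⟩ ⟨a₂.2, fun h => h₂ (ModelOn.coe_mem_restrict.1 h)⟩
  have hsub : (N₂.restrict f.cod).1 ∪ {(φ a₁ : Ω)} ⊆ C₁.1 := hcl ▸ subset_aecCl K N' _
  obtain ⟨P, r, hP, hr⟩ := K.iso_resp hC₁ φ.symm
  have hr' : ∀ (x : ↥N₁.1) (h : (φ x : Ω) ∈ C₁.1), (r ⟨φ x, h⟩ : Ω) = x := fun x h => by
    rw [hr ⟨φ x, h⟩ (φ x) rfl, Language.Equiv.symm_apply_apply]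
  obtain ⟨f', hf', hgraph⟩ := exists_isPartialIso hP hC₂ (k.comp r.symm)
  refine ⟨f', hf', partialEquiv_le_of_forall_exists fun x => ?_, ?_⟩
  · have hxQ : (φ x : Ω) ∈ (N₂.restrict f.cod).1 :=
      hφ x ▸ ModelOn.coe_mem_restrict.2 (f.toEquiv x).2
    have hxC : (φ x : Ω) ∈ C₁.1 := hsub (Or.inl hxQ)
    obtain ⟨y, hyx, hy⟩ := hgraph (r ⟨φ x, hxC⟩)
    refine ⟨y, Subtype.ext (hyx.trans (hr' x hxC)), Subtype.ext ?_⟩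
    calc (f'.toEquiv y : Ω) = k (r.symm (r ⟨φ x, hxC⟩)) := hy
      _ = k ⟨φ x, hxC⟩ := by rw [Language.Equiv.symm_apply_apply]
      _ = φ x := hk _ hxQ
      _ = f.toEquiv x := hφ x
  · have haC : (φ a₁ : Ω) ∈ C₁.1 := hsub (Or.inr rfl)
    obtain ⟨y, hya, -⟩ := hgraph (r ⟨φ a₁, haC⟩)
    obtain rfl : (y : ↥N₁.1) = a₁ := Subtype.ext (hya.trans (hr' a₁ haC))
    exact y.2

theorem dom_eq_top_or_cod_eq_top_of_maximal (hG : GenericUnique K) (c₁ : #N₁.1 ≤ ℵ₀)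
    (c₂ : #N₂.1 ≤ ℵ₀) (hf : Maximal K.IsPartialIso f) : f.dom = ⊤ ∨ f.cod = ⊤ := by
  by_contra! h
  obtain ⟨a₁, h₁⟩ : ∃ a₁, a₁ ∉ f.dom := by simpa [SetLike.ext_iff] using h.1
  obtain ⟨a₂, h₂⟩ : ∃ a₂, a₂ ∉ f.cod := by simpa [SetLike.ext_iff] using h.2
  rcases Function.Embedding.total ↥(f.dom : Set ↥N₁.1)ᶜ ↥(f.cod : Set ↥N₂.1)ᶜ with ⟨⟨j⟩⟩ | ⟨⟨j⟩⟩
  · obtain ⟨f', hf', hle, ha₁⟩ := hG.exists_ge_mem_dom c₁ c₂ hf.prop h₁ h₂ j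
    exact h₁ ((hf.eq_of_le hf' hle).symm ▸ ha₁)
  · obtain ⟨f', hf', hle, ha₂⟩ := hG.exists_ge_mem_dom c₂ c₁ hf.prop.symm h₂ h₁ j
    have hle' : f ≤ f'.symm := Language.PartialEquiv.symm_le_iff.1 hle
    exact h₂ (Language.PartialEquiv.cod_le_cod (hf.le_of_ge hf'.symm hle') ha₂)

theorem kEmbedFixing_or_kEmbedFixing (hG : GenericUnique K) (c₁ : #N₁.1 ≤ ℵ₀) (c₂ : #N₂.1 ≤ ℵ₀)
    (h₁ : K.le M₁ N₁) (h₂ : K.le M₂ N₂) (g : ↥M₁.1 ≃[L] ↥M₂.1) {F : Set Ω}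
    (hF : ∀ x ∈ F, ∃ y : ↥M₁.1, (y : Ω) = x ∧ (g y : Ω) = x) :
    KEmbedFixing K N₁ N₂ F ∨ KEmbedFixing K N₂ N₁ F := by
  obtain ⟨f₀, hf₀, hgraph⟩ := exists_isPartialIso h₁ h₂ g
  obtain ⟨f, hle, hmax⟩ := hf₀.exists_le_maximal
  have hfix : ∀ x ∈ F, ∃ y : f.dom, (y : Ω) = x ∧ (f.toEquiv y : Ω) = x := fun x hx => by
    obtain ⟨y, rfl, hy⟩ := hF x hx
    obtain ⟨z, hzy, hz⟩ := hgraph y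
    refine ⟨Language.Substructure.inclusion (Language.PartialEquiv.dom_le_dom hle) z, hzy, ?_⟩
    rw [Language.PartialEquiv.toEquiv_inclusion_apply hle]
    exact hz.trans hy
  rcases hG.dom_eq_top_or_cod_eq_top_of_maximal c₁ c₂ hmax with htop | htop
  · exact Or.inl (hmax.prop.kEmbedFixing_of_dom_eq_top htop hfix)
  · refine Or.inr (hmax.prop.symm.kEmbedFixing_of_dom_eq_top htop fun x hx => ?_)
    obtain ⟨y, hyx, hy⟩ := hfix x hx
    exact ⟨f.toEquiv y, hy, by
      rw [Language.PartialEquiv.symm_apply, Language.Equiv.symm_apply_apply, hyx]⟩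

end GenericUnique

theorem stmt16_general (K : AECStr L Ω) (hG : GenericUnique K)
    (hprime : ∃ M ∈ K.mem, ∀ N ∈ K.mem, KEmbedFixing K M N ∅) :
    (∀ M N₁ N₂ : ModelOn L Ω, #N₁.1 ≤ ℵ₀ → #N₂.1 ≤ ℵ₀ → K.le M N₁ → K.le M N₂ →
      KEmbedFixing K N₁ N₂ M.1 ∨ KEmbedFixing K N₂ N₁ M.1) ∧
    (∀ N₁ N₂ : ModelOn L Ω, N₁ ∈ K.mem → N₂ ∈ K.mem → #N₁.1 ≤ ℵ₀ → #N₂.1 ≤ ℵ₀ →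
      KEmbedFixing K N₁ N₂ ∅ ∨ KEmbedFixing K N₂ N₁ ∅) := by
  constructor
  · intro M N₁ N₂ c₁ c₂ h₁ h₂
    exact hG.kEmbedFixing_or_kEmbedFixing c₁ c₂ h₁ h₂ (Language.Equiv.refl L _)
      fun x hx => ⟨⟨x, hx⟩, rfl, rfl⟩
  · intro N₁ N₂ h₁ h₂ c₁ c₂
    obtain ⟨M, -, hM⟩ := hprime
    obtain ⟨M₁, hM₁, g₁, -⟩ := hM N₁ h₁
    obtain ⟨M₂, hM₂, g₂, -⟩ := hM N₂ h₂
    exact hG.kEmbedFixing_or_kEmbedFixing c₁ c₂ hM₁ hM₂ (g₂.comp g₁.symm)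
      fun x hx => hx.elim

/-- The restriction of a quasiminimal AEC to countable models has amalgamation
and joint embedding. -/
theorem stmt16 (K : AECStr L Ω) (hK : IsQuasiminimal K) :
    (∀ M N₁ N₂ : ModelOn L Ω, #M.1 ≤ ℵ₀ → #N₁.1 ≤ ℵ₀ → #N₂.1 ≤ ℵ₀ →
      K.le M N₁ → K.le M N₂ →
      ∃ N ∈ K.mem, KEmbedFixing K N₁ N M.1 ∧ KEmbedFixing K N₂ N M.1) ∧
    (∀ N₁ N₂ : ModelOn L Ω, N₁ ∈ K.mem → N₂ ∈ K.mem →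
      #N₁.1 ≤ ℵ₀ → #N₂.1 ≤ ℵ₀ →
      ∃ N ∈ K.mem, KEmbedFixing K N₁ N ∅ ∧ KEmbedFixing K N₂ N ∅) := by
  obtain ⟨amalg, joint⟩ := stmt16_general K hK.2.2.2 hK.2.1
  exact ⟨fun M N₁ N₂ _ c₁ c₂ h₁ h₂ =>
      exists_common_extension_of_kEmbedFixing (amalg M N₁ N₂ c₁ c₂ h₁ h₂),
    fun N₁ N₂ h₁ h₂ c₁ c₂ =>
      exists_common_extension_of_kEmbedFixing (joint N₁ N₂ h₁ h₂ c₁ c₂)⟩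
end
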